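/- Let R be a commutative Noetherian local ring, let M be a finitely generated R-module, and suppose there is a short exact sequence of finitely generated R-modules 0 → M^{⊕a} → K → Ω^n M^{⊕b} → 0, where a ≥ 1, b ≥ 1, and n ≥ 0 are integers. If K has finite Gorenstein dimension, then for each integer i ≥ 1 there exists a short exact sequence of finitely generated R-modules 0 → M^{⊕a_i} → Y_i → Ω^{r_i} M^{⊕b_i} → 0, where Y_i has finite Gorenstein dimension, r_i = 2^i(n+1) − 1, a_i = a^{2^i}, and b_i = b^{2^i}. -/

import Mathlib

open CategoryTheory Pointwise

universe u

variable (R : Type u) [CommRing R]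

/-- `Ext^n_R(X, Y) = 0`. -/
def ExtVanish (X Y : Type u) [AddCommGroup X] [Module R X]
    [AddCommGroup Y] [Module R Y] (n : ℕ) : Prop :=
  Subsingleton (((Ext R (ModuleCat.{u} R) n).obj
    (Opposite.op (ModuleCat.of R X))).obj (ModuleCat.of R Y))

/-- A finitely generated module `X` is totally reflexive if the evaluation map to the
double dual is bijective and `Ext^i(X, R) = 0 = Ext^i(X^*, R)` for all `i ≥ 1`. -/
def IsTotallyReflexive (X : Type u) [AddCommGroup X] [Module R X] : Prop :=
  Module.Finite R X ∧
  Function.Bijective (Module.Dual.eval R X) ∧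
  (∀ i : ℕ, 1 ≤ i → ExtVanish R X R i) ∧
  (∀ i : ℕ, 1 ≤ i → ExtVanish R (Module.Dual R X) R i)

/-- `0 → A → B → C → 0` is a short exact sequence. -/
def IsShortExact {A B C : Type u} [AddCommGroup A] [Module R A] [AddCommGroup B] [Module R B]
    [AddCommGroup C] [Module R C] (f : A →ₗ[R] B) (g : B →ₗ[R] C) : Prop :=
  Function.Injective f ∧ Function.Surjective g ∧ Function.Exact f g

/-- Gorenstein dimension at most `n`: there is a resolution of length `≤ n`
by totally reflexive modules. -/
def GdimLE : ℕ → ModuleCat.{u} R → Prop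
  | 0, M => IsTotallyReflexive R M
  | n + 1, M => ∃ (X K : ModuleCat.{u} R) (f : K →ₗ[R] X) (g : X →ₗ[R] M),
      IsTotallyReflexive R X ∧ IsShortExact R f g ∧ GdimLE n K

/-- Projective dimension at most `n`. -/
def PdimLE : ℕ → ModuleCat.{u} R → Prop
  | 0, M => Module.Finite R M ∧ Module.Projective R M
  | n + 1, M => ∃ (X K : ModuleCat.{u} R) (f : K →ₗ[R] X) (g : X →ₗ[R] M),
      Module.Finite R X ∧ Module.Projective R X ∧ IsShortExact R f g ∧ PdimLE n K

/-- Injective dimension at most `n`. -/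
def InjdimLE : ℕ → ModuleCat.{u} R → Prop
  | 0, M => Module.Injective R M
  | n + 1, M => ∃ (I C : ModuleCat.{u} R) (f : M →ₗ[R] I) (g : I →ₗ[R] C),
      Module.Injective R I ∧ IsShortExact R f g ∧ InjdimLE n C

/-- The Gorenstein dimension, as an element of `ℕ∞`. -/
noncomputable def Gdim (M : ModuleCat.{u} R) : ℕ∞ :=
  sInf {n : ℕ∞ | ∃ m : ℕ, n = (m : ℕ∞) ∧ GdimLE R m M}

/-- The projective dimension, as an element of `ℕ∞`. -/
noncomputable def Pdim (M : ModuleCat.{u} R) : ℕ∞ :=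
  sInf {n : ℕ∞ | ∃ m : ℕ, n = (m : ℕ∞) ∧ PdimLE R m M}

/-- A local ring is Gorenstein if it has finite injective dimension over itself. -/
def IsGorensteinRing : Prop :=
  ∃ n : ℕ, InjdimLE R n (ModuleCat.of R R)

/-- `IsSyzygy R n S K` : `S` is an `n`-th syzygy of `K`, i.e. there is an exact sequence
`0 → S → F_{n-1} → ⋯ → F_0 → K → 0` with each `F_j` finitely generated free. -/
def IsSyzygy : ℕ → ModuleCat.{u} R → ModuleCat.{u} R → Prop
  | 0, S, K => Nonempty (S ≃ₗ[R] K)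
  | n + 1, S, K => ∃ (W F : ModuleCat.{u} R) (f : W →ₗ[R] F) (g : F →ₗ[R] K),
      Module.Free R F ∧ Module.Finite R F ∧ IsShortExact R f g ∧ IsSyzygy n S W

/-- One step in a reducing sequence: a short exact sequence
`0 → K^{⊕a} → L → (Ω^n K)^{⊕b} → 0`. -/
def ReducingStep (K L : ModuleCat.{u} R) (a b n : ℕ) : Prop :=
  ∃ (W : ModuleCat.{u} R) (f : (Fin a → K) →ₗ[R] L) (g : L →ₗ[R] (Fin b → W)),
    IsSyzygy R n W K ∧ IsShortExact R f g

/-- `M` admits a reducing sequence `K_0 = M, K_1, …, K_r` relative to the property `P`,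
that is, short exact sequences `0 → K_{i-1}^{⊕a_i} → K_i → (Ω^{n_i}K_{i-1})^{⊕b_i} → 0`
with `a_i, b_i, n_i ≥ 1` and `P (K_r)`. -/
def HasReducingSeq (P : ModuleCat.{u} R → Prop) (M : ModuleCat.{u} R) (r : ℕ) : Prop :=
  ∃ (K : Fin (r + 1) → ModuleCat.{u} R) (a b n : Fin r → ℕ),
    K 0 = M ∧ (∀ i, Module.Finite R (K i)) ∧
    (∀ i : Fin r, 1 ≤ a i ∧ 1 ≤ b i ∧ 1 ≤ n i ∧
      ReducingStep R (K i.castSucc) (K i.succ) (a i) (b i) (n i)) ∧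
    P (K (Fin.last r))

/-- The reducing invariant attached to the finiteness property `P`. -/
noncomputable def ReducingDim (P : ModuleCat.{u} R → Prop) (M : ModuleCat.{u} R) : ℕ∞ :=
  sInf {n : ℕ∞ | ∃ r : ℕ, n = (r : ℕ∞) ∧ HasReducingSeq R P M r}

/-- The reducing Gorenstein dimension. -/
noncomputable def rGdim (M : ModuleCat.{u} R) : ℕ∞ :=
  ReducingDim R (fun N => ∃ m : ℕ, GdimLE R m N) M

/-- The reducing projective dimension. -/
noncomputable def rPdim (M : ModuleCat.{u} R) : ℕ∞ :=
  ReducingDim R (fun N => ∃ m : ℕ, PdimLE R m N) M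

/-- depth of a module over a local ring: `inf { i | Ext^i(k, M) ≠ 0 }`. -/
noncomputable def depth [IsLocalRing R] (M : ModuleCat.{u} R) : ℕ∞ :=
  sInf {n : ℕ∞ | ∃ i : ℕ, n = (i : ℕ∞) ∧
    ¬ ExtVanish R (R ⧸ IsLocalRing.maximalIdeal R) M i}

/-- maximal Cohen-Macaulay: depth equals the Krull dimension of the ring. -/
def IsMCM [IsLocalRing R] (M : ModuleCat.{u} R) : Prop :=
  (depth R M : WithBot ℕ∞) = ringKrullDim R

/-- torsion-free: every non zero-divisor of `R` is a non zero-divisor on `M`. -/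
def IsTorsionFreeModule (M : Type u) [AddCommGroup M] [Module R M] : Prop :=
  ∀ r ∈ nonZeroDivisors R, ∀ m : M, r • m = 0 → m = 0

/-!
Given `0 → M^a → K → (Ω^n M)^b → 0` with `K` of finite Gorenstein dimension, iterating the horseshoe
lemma on `(n+1)`-th syzygies gives `0 → (Ω^{n+1} M)^a → L → (Ω^{2n+1} M)^b → 0` with `L` again of
finite Gorenstein dimension. On the other hand, covering `Ω^n M` by a finite free module with kernel
`Ω^{n+1} M` turns the `a`-th power of the given sequence into
`0 → (Ω^{n+1} M)^{ab} → M^{a²} ⊕ F → K^a → 0` with `F` finite free. The pushout `P` of this sequence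
and the `b`-th power of the one for `L` along their common left term is an extension of `K^a` by
`L^b`, hence has finite Gorenstein dimension, and so does `Y = P / F`, which is an extension of
`(Ω^{2n+1} M)^{b²}` by `M^{a²}`. Thus `a` and `b` are squared and `n + 1` is doubled; iterate.
-/

section IsShortExact

variable {R}
variable {A B C A' B' C' F S U N P : Type u}
  [AddCommGroup A] [Module R A] [AddCommGroup B] [Module R B] [AddCommGroup C] [Module R C]
  [AddCommGroup A'] [Module R A'] [AddCommGroup B'] [Module R B'] [AddCommGroup C'] [Module R C']
  [AddCommGroup F] [Module R F] [AddCommGroup S] [Module R S] [AddCommGroup U] [Module R U]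
  [AddCommGroup N] [Module R N] [AddCommGroup P] [Module R P]
  {f : A →ₗ[R] B} {g : B →ₗ[R] C}

namespace IsShortExact

theorem injective (h : IsShortExact R f g) : Function.Injective f := h.1

theorem surjective (h : IsShortExact R f g) : Function.Surjective g := h.2.1

theorem exact (h : IsShortExact R f g) : Function.Exact f g := h.2.2

theorem apply_apply_eq_zero (h : IsShortExact R f g) (x : A) : g (f x) = 0 :=
  h.exact.apply_apply_eq_zero x

theorem exists_apply_eq (h : IsShortExact R f g) {y : B} (hy : g y = 0) : ∃ x, f x = y :=
  (h.exact y).1 hy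

theorem ker_subtype (hg : Function.Surjective g) : IsShortExact R (LinearMap.ker g).subtype g :=
  ⟨Subtype.val_injective, hg, g.exact_subtype_ker_map⟩

theorem range_mkQ (hf : Function.Injective f) : IsShortExact R f (LinearMap.range f).mkQ :=
  ⟨hf, Submodule.mkQ_surjective _, f.exact_map_mkQ_range⟩

theorem zero_linearEquiv (e : A ≃ₗ[R] B) :
    IsShortExact R (0 : PUnit.{u + 1} →ₗ[R] A) e.toLinearMap :=
  ⟨Function.injective_of_subsingleton _, e.surjective,
    (LinearMap.exact_zero_iff_injective _ _).2 e.injective⟩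

theorem inl_snd : IsShortExact R (LinearMap.inl R A B) (LinearMap.snd R A B) :=
  ⟨LinearMap.inl_injective, LinearMap.snd_surjective, .inl_snd⟩

theorem congr_outer (h : IsShortExact R f g) (e : A' ≃ₗ[R] A) (e' : C ≃ₗ[R] C') :
    IsShortExact R (f ∘ₗ e.toLinearMap) (e'.toLinearMap ∘ₗ g) :=
  ⟨h.injective.comp e.injective, e'.surjective.comp h.surjective,
    (e'.injective.comp_exact_iff_exact).2 ((e.surjective.comp_exact_iff_exact).2 h.exact)⟩

theorem congr_middle (h : IsShortExact R f g) (e : B ≃ₗ[R] B') :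
    IsShortExact R (e.toLinearMap ∘ₗ f) (g ∘ₗ e.symm.toLinearMap) :=
  ⟨e.injective.comp h.injective, h.surjective.comp e.symm.surjective,
    (LinearEquiv.conj_exact_iff_exact f g e).2 h.exact⟩

theorem compLeft (h : IsShortExact R f g) (ι : Type) :
    IsShortExact R (f.compLeft ι) (g.compLeft ι) := by
  refine ⟨h.injective.comp_left, h.surjective.comp_left, LinearMap.exact_iff.2 ?_⟩
  rw [LinearMap.ker_compLeft, LinearMap.range_compLeft, h.exact.linearMap_ker_eq]

theorem prodMap_id (h : IsShortExact R f g) :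
    IsShortExact R (LinearMap.inl R B F ∘ₗ f) (g.prodMap (LinearMap.id : F →ₗ[R] F)) := by
  refine ⟨LinearMap.inl_injective.comp h.injective,
    h.surjective.prodMap Function.surjective_id, ?_⟩
  rintro ⟨b, y⟩
  constructor
  · intro hby
    obtain ⟨hb, rfl⟩ : g b = 0 ∧ y = 0 := by simpa using hby
    obtain ⟨a, rfl⟩ := h.exists_apply_eq hb
    exact ⟨a, rfl⟩
  · rintro ⟨a, ha⟩
    simp [← ha, h.apply_apply_eq_zero]

theorem exists_lift (h : IsShortExact R f g) {φ : N →ₗ[R] B} (hφ : g ∘ₗ φ = 0) :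
    ∃ ψ : N →ₗ[R] A, f ∘ₗ ψ = φ := by
  let φ' := φ.codRestrict (LinearMap.range f) fun x => (h.exact _).1 (LinearMap.congr_fun hφ x)
  refine ⟨(LinearEquiv.ofInjective f h.injective).symm.toLinearMap ∘ₗ φ', LinearMap.ext fun x => ?_⟩
  exact congrArg Subtype.val ((LinearEquiv.ofInjective f h.injective).apply_symm_apply (φ' x))

theorem exists_desc (h : IsShortExact R f g) {φ : B →ₗ[R] N} (hφ : φ ∘ₗ f = 0) :
    ∃ ψ : C →ₗ[R] N, ψ ∘ₗ g = φ :=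
  (LinearMap.exact_lcomp_of_exact_of_surjective (N := N) h.exact h.surjective φ).1 hφ

theorem nonempty_equiv_prod [Module.Projective R C] (h : IsShortExact R f g) :
    Nonempty (B ≃ₗ[R] A × C) :=
  have ⟨l, hl⟩ := Module.projective_lifting_property g LinearMap.id h.surjective
  ⟨(h.exact.splitSurjectiveEquiv h.injective ⟨l, hl⟩).1⟩

theorem bijective_middle {f' : A' →ₗ[R] B'} {g' : B' →ₗ[R] C'} (h : IsShortExact R f g)
    (h' : IsShortExact R f' g') {α : A →ₗ[R] A'} {β : B →ₗ[R] B'} {γ : C →ₗ[R] C'}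
    (hαβ : f' ∘ₗ α = β ∘ₗ f) (hβγ : g' ∘ₗ β = γ ∘ₗ g)
    (hα : Function.Bijective α) (hγ : Function.Bijective γ) : Function.Bijective β :=
  LinearMap.bijective_of_surjective_of_bijective_of_bijective_of_injective
    (0 : PUnit →ₗ[R] A) f g (0 : C →ₗ[R] PUnit) (0 : PUnit →ₗ[R] A') f' g' (0 : C' →ₗ[R] PUnit)
    LinearMap.id α β γ LinearMap.id (by simp) hαβ hβγ (by simp)
    ((LinearMap.exact_zero_iff_injective _ f).2 h.injective) h.exact
    ((LinearMap.exact_zero_iff_surjective _ g).2 h.surjective)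
    ((LinearMap.exact_zero_iff_injective _ f').2 h'.injective) h'.exact
    ((LinearMap.exact_zero_iff_surjective _ g').2 h'.surjective)
    Function.surjective_id hα hγ Function.injective_id

/-! ### Pullbacks and pushouts

A pullback `P` of `g` and `p` is encoded by exactness of `0 → P → B × F → C → 0`, and dually for
pushouts. The sign that usually appears in one of the two maps does not affect exactness. -/

theorem exists_pullback_snd (h : IsShortExact R f g) {p : F →ₗ[R] C} {k : P →ₗ[R] B × F}
    (hk : IsShortExact R k (g.coprod p)) :
    ∃ s : A →ₗ[R] P, IsShortExact R s (LinearMap.snd R B F ∘ₗ k) := by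
  obtain ⟨s, hs⟩ := hk.exists_lift (φ := LinearMap.inl R B F ∘ₗ f) <| LinearMap.ext fun a => by
    simpa using h.apply_apply_eq_zero a
  replace hs (a : A) : k (s a) = (f a, 0) := LinearMap.congr_fun hs a
  refine ⟨s, fun a a' haa' => ?_, fun y => ?_, fun z => ⟨fun hz => ?_, ?_⟩⟩
  · have : (f a, (0 : F)) = (f a', 0) := by rw [← hs, ← hs, haa']
    exact h.injective (congrArg Prod.fst this)
  · obtain ⟨b, hb⟩ := h.surjective (-p y)
    obtain ⟨z, hz⟩ := hk.exists_apply_eq (y := (b, y)) (by simp [hb])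
    exact ⟨z, by simp [hz]⟩
  · have hz' : (k z).2 = 0 := hz
    have hb : g (k z).1 = 0 := by simpa [hz'] using hk.apply_apply_eq_zero z
    obtain ⟨a, ha⟩ := h.exists_apply_eq hb
    exact ⟨a, hk.injective (by rw [hs, ha, ← hz'])⟩
  · rintro ⟨a, rfl⟩
    simp [hs]

theorem pullback_fst {p : F →ₗ[R] C} {r : C →ₗ[R] N} (h : IsShortExact R p r)
    (hg : Function.Surjective g) {k : P →ₗ[R] B × F} (hk : IsShortExact R k (g.coprod p)) :
    IsShortExact R (LinearMap.fst R B F ∘ₗ k) (r ∘ₗ g) := by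
  have hgp (z : P) : g (k z).1 = -p (k z).2 :=
    eq_neg_of_add_eq_zero_left (by simpa using hk.apply_apply_eq_zero z)
  refine ⟨(injective_iff_map_eq_zero _).2 fun z hz => ?_, h.surjective.comp hg,
    fun b => ⟨fun hb => ?_, ?_⟩⟩
  · have hz₁ : (k z).1 = 0 := hz
    have hz₂ : (k z).2 = 0 := h.injective (by simpa [hz₁] using hgp z)
    exact hk.injective (by rw [map_zero, ← Prod.mk.eta (p := k z), hz₁, hz₂, Prod.mk_zero_zero])
  · obtain ⟨y, hy⟩ := h.exists_apply_eq hb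
    obtain ⟨z, hz⟩ := hk.exists_apply_eq (y := (b, -y)) (by simp [hy])
    exact ⟨z, by simp [hz]⟩
  · rintro ⟨z, rfl⟩
    simp [hgp, h.apply_apply_eq_zero]

theorem exists_pushout_inl {i : U →ₗ[R] B} (h : IsShortExact R i g) {v : U →ₗ[R] A}
    {π : A × B →ₗ[R] P} (hπ : IsShortExact R (v.prod i) π) :
    ∃ t : P →ₗ[R] C, IsShortExact R (π ∘ₗ LinearMap.inl R A B) t := by
  obtain ⟨t, ht⟩ := hπ.exists_desc (φ := g ∘ₗ LinearMap.snd R A B) <| LinearMap.ext fun x => by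
    simpa using h.apply_apply_eq_zero x
  replace ht (x : A × B) : t (π x) = g x.2 := LinearMap.congr_fun ht x
  refine ⟨t, (injective_iff_map_eq_zero _).2 fun a ha => ?_, fun c => ?_, fun y => ⟨?_, ?_⟩⟩
  · obtain ⟨x, hx⟩ := hπ.exists_apply_eq ha
    obtain ⟨rfl, hx₀⟩ : v x = a ∧ i x = 0 := by simpa using hx
    rw [(injective_iff_map_eq_zero i).1 h.injective x hx₀, map_zero]
  · obtain ⟨b, rfl⟩ := h.surjective c
    exact ⟨π (0, b), ht _⟩
  · obtain ⟨⟨a, b⟩, rfl⟩ := hπ.surjective y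
    intro hb
    obtain ⟨x, rfl⟩ := h.exists_apply_eq ((ht _).symm.trans hb)
    refine ⟨a - v x, sub_eq_zero.1 ?_⟩
    have : (a - v x, (0 : B)) - (a, i x) = -(v.prod i x) := by simp
    rw [LinearMap.comp_apply, LinearMap.inl_apply, ← map_sub, this, map_neg,
      hπ.apply_apply_eq_zero, neg_zero]
  · rintro ⟨a, rfl⟩
    simp [ht]

theorem pushout_inr {u : N →ₗ[R] U} {v : U →ₗ[R] A} (h : IsShortExact R u v) {i : U →ₗ[R] B}
    (hi : Function.Injective i) {π : A × B →ₗ[R] P} (hπ : IsShortExact R (v.prod i) π) :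
    IsShortExact R (i ∘ₗ u) (π ∘ₗ LinearMap.inr R A B) := by
  have hvi (x : U) : π (v x, i x) = 0 := hπ.apply_apply_eq_zero x
  refine ⟨hi.comp h.injective, fun y => ?_, fun b => ⟨fun hb => ?_, ?_⟩⟩
  · obtain ⟨⟨a, b⟩, rfl⟩ := hπ.surjective y
    obtain ⟨x, rfl⟩ := h.surjective a
    refine ⟨b - i x, sub_eq_zero.1 ?_⟩
    have : ((0 : A), b - i x) - (v x, b) = -(v.prod i x) := by simp
    rw [LinearMap.comp_apply, LinearMap.inr_apply, ← map_sub, this, map_neg,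
      hπ.apply_apply_eq_zero, neg_zero]
  · obtain ⟨x, hx⟩ := hπ.exists_apply_eq hb
    obtain ⟨hx₀, rfl⟩ : v x = 0 ∧ i x = b := by simpa using hx
    obtain ⟨w, rfl⟩ := h.exists_apply_eq hx₀
    exact ⟨w, rfl⟩
  · rintro ⟨w, rfl⟩
    simpa [h.apply_apply_eq_zero] using hvi (u w)

theorem exists_pullback (h : IsShortExact R f g) {i : S →ₗ[R] F} {p : F →ₗ[R] C}
    (hp : IsShortExact R i p) :
    ∃ (P : ModuleCat.{u} R) (s : A →ₗ[R] P) (t : P →ₗ[R] F) (s' : S →ₗ[R] P) (t' : P →ₗ[R] B),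
      IsShortExact R s t ∧ IsShortExact R s' t' := by
  have hq : Function.Surjective (g.coprod p) := fun c =>
    have ⟨b, hb⟩ := h.surjective c
    ⟨(b, 0), by simp [hb]⟩
  have hk := ker_subtype hq
  have hk' := hk.congr_middle (LinearEquiv.prodComm R B F)
  have hswap : g.coprod p ∘ₗ (LinearEquiv.prodComm R B F).symm.toLinearMap = p.coprod g := by
    ext <;> simp
  obtain ⟨s, hs⟩ := h.exists_pullback_snd hk
  obtain ⟨s', hs'⟩ := hp.exists_pullback_snd (hswap ▸ hk')
  exact ⟨ModuleCat.of R (LinearMap.ker (g.coprod p)), s, _, s', _, hs, hs'⟩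

theorem exists_pushout {i : U →ₗ[R] A} {p : A →ₗ[R] C} (h : IsShortExact R i p)
    {j : U →ₗ[R] A'} {q : A' →ₗ[R] C'} (h' : IsShortExact R j q) :
    ∃ (P : ModuleCat.{u} R) (s : A →ₗ[R] P) (t : P →ₗ[R] C') (s' : A' →ₗ[R] P) (t' : P →ₗ[R] C),
      IsShortExact R s t ∧ IsShortExact R s' t' := by
  have hij : Function.Injective (i.prod j) := fun _ _ hxy => h.injective (congrArg Prod.fst hxy)
  have hπ := range_mkQ hij
  have hπ' := hπ.congr_middle (LinearEquiv.prodComm R A A')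
  have hswap : (LinearEquiv.prodComm R A A').toLinearMap ∘ₗ i.prod j = j.prod i := rfl
  obtain ⟨t, ht⟩ := h'.exists_pushout_inl hπ
  obtain ⟨t', ht'⟩ := h.exists_pushout_inl (hswap ▸ hπ')
  exact ⟨ModuleCat.of R ((A × A') ⧸ LinearMap.range (i.prod j)), _, t, _, t', ht, ht'⟩

theorem exists_ker_comp (h : IsShortExact R f g) {k : S →ₗ[R] F} {p : F →ₗ[R] B}
    (hp : IsShortExact R k p) :
    ∃ (L : ModuleCat.{u} R) (s : S →ₗ[R] L) (t : L →ₗ[R] A) (l : L →ₗ[R] F),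
      IsShortExact R s t ∧ IsShortExact R l (g ∘ₗ p) := by
  have hq : Function.Surjective (p.coprod f) := fun b =>
    have ⟨y, hy⟩ := hp.surjective b
    ⟨(y, 0), by simp [hy]⟩
  have hk := ker_subtype hq
  obtain ⟨s, hs⟩ := hp.exists_pullback_snd hk
  exact ⟨ModuleCat.of R (LinearMap.ker (p.coprod f)), s, _, _, hs, h.pullback_fst hp.surjective hk⟩

theorem exists_coker_comp {i : U →ₗ[R] B} (h : IsShortExact R i g) {u : N →ₗ[R] U} {v : U →ₗ[R] A}
    (hu : IsShortExact R u v) :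
    ∃ (Y : ModuleCat.{u} R) (q : B →ₗ[R] Y) (s : A →ₗ[R] Y) (t : Y →ₗ[R] C),
      IsShortExact R (i ∘ₗ u) q ∧ IsShortExact R s t := by
  have hvi : Function.Injective (v.prod i) := fun _ _ hxy => h.injective (congrArg Prod.snd hxy)
  have hπ := range_mkQ hvi
  obtain ⟨t, ht⟩ := h.exists_pushout_inl hπ
  exact ⟨ModuleCat.of R ((A × B) ⧸ LinearMap.range (v.prod i)), _, _, t,
    hu.pushout_inr h.injective hπ, ht⟩

theorem exists_prod_of_projective [Module.Projective R F] (h : IsShortExact R f g)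
    {i : S →ₗ[R] F} {p : F →ₗ[R] C} (hp : IsShortExact R i p) :
    ∃ (j : S →ₗ[R] A × F) (q : A × F →ₗ[R] B), IsShortExact R j q := by
  obtain ⟨P, _, _, _, _, hA, hS⟩ := h.exists_pullback hp
  obtain ⟨e⟩ := hA.nonempty_equiv_prod
  exact ⟨_, _, hS.congr_middle e⟩

theorem exists_horseshoe {SA FA SC FC : Type u} [AddCommGroup SA] [Module R SA]
    [AddCommGroup FA] [Module R FA] [AddCommGroup SC] [Module R SC]
    [AddCommGroup FC] [Module R FC] [Module.Projective R FC] (h : IsShortExact R f g)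
    {i : SA →ₗ[R] FA} {p : FA →ₗ[R] A} (hA : IsShortExact R i p)
    {j : SC →ₗ[R] FC} {q : FC →ₗ[R] C} (hC : IsShortExact R j q) :
    ∃ (SB : ModuleCat.{u} R) (k : SB →ₗ[R] FA × FC) (r : FA × FC →ₗ[R] B)
      (f' : SA →ₗ[R] SB) (g' : SB →ₗ[R] SC), IsShortExact R k r ∧ IsShortExact R f' g' := by
  obtain ⟨_, _, hB⟩ := h.exists_prod_of_projective hC
  obtain ⟨SB, f', g', k, hS, hk⟩ := hB.exists_ker_comp hA.prodMap_id
  exact ⟨SB, k, _, f', g', hk, hS⟩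

end IsShortExact

end IsShortExact

section ExtVanish

variable {R}
variable {A B C N : Type u} [AddCommGroup A] [Module R A] [AddCommGroup B] [Module R B]
  [AddCommGroup C] [Module R C] [AddCommGroup N] [Module R N]
  {f : A →ₗ[R] B} {g : B →ₗ[R] C} {n : ℕ}

theorem extVanish_succ_iff_forall_cocycle (P : ProjectiveResolution (ModuleCat.of R A)) :
    ExtVanish R A N (n + 1) ↔
      ∀ φ : P.complex.X (n + 1) ⟶ ModuleCat.of R N, P.complex.d (n + 2) (n + 1) ≫ φ = 0 →
        ∃ ψ : P.complex.X n ⟶ ModuleCat.of R N, P.complex.d (n + 1) n ≫ ψ = φ := by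
  rw [ExtVanish, ← ModuleCat.isZero_iff_subsingleton,
    (P.isoExt (n + 1) (ModuleCat.of R N)).isZero_iff,
    ← HomologicalComplex.exactAt_iff_isZero_homology,
    HomologicalComplex.exactAt_iff' _ n (n + 1) (n + 2) (by simp) (by simp),
    ShortComplex.moduleCat_exact_iff]
  rfl

theorem extVanish_iff_subsingleton_ext (hn : 1 ≤ n) :
    ExtVanish R A N n ↔ Subsingleton (Abelian.Ext (ModuleCat.of R A) (ModuleCat.of R N) n) := by
  obtain ⟨n, rfl⟩ := Nat.exists_eq_add_of_le' hn
  let P := projectiveResolution (ModuleCat.of R A)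
  rw [extVanish_succ_iff_forall_cocycle P]
  constructor
  · intro h
    refine subsingleton_of_forall_eq 0 fun x => ?_
    obtain ⟨φ, hφ, rfl⟩ := P.extMk_surjective x (n + 2) rfl
    exact (P.extMk_eq_zero_iff φ (n + 2) rfl hφ n rfl).2 (h φ hφ)
  · intro h φ hφ
    exact (P.extMk_eq_zero_iff φ (n + 2) rfl hφ n rfl).1 (Subsingleton.elim _ _)

namespace IsShortExact

/-- A short exact sequence as a short complex in the category of modules, to which the long exact
sequence of `Abelian.Ext` applies. -/
abbrev shortComplex (h : IsShortExact R f g) : ShortComplex (ModuleCat.{u} R) :=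
  ModuleCat.shortComplexOfCompEqZero f g (LinearMap.ext h.apply_apply_eq_zero)

theorem shortExact (h : IsShortExact R f g) : h.shortComplex.ShortExact where
  exact := (ShortComplex.ShortExact.moduleCat_exact_iff_function_exact _).2 h.exact
  mono_f := (ModuleCat.mono_iff_injective _).2 h.injective
  epi_g := (ModuleCat.epi_iff_surjective _).2 h.surjective

theorem extVanish_middle (h : IsShortExact R f g) (hn : 1 ≤ n) (hA : ExtVanish R A N n)
    (hC : ExtVanish R C N n) : ExtVanish R B N n := by
  rw [extVanish_iff_subsingleton_ext hn] at *
  refine subsingleton_of_forall_eq 0 fun x => ?_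
  obtain ⟨y, rfl⟩ := Abelian.Ext.contravariant_sequence_exact₂ h.shortExact _ x (hA.elim _ _)
  rw [hC.elim y 0, Abelian.Ext.comp_zero]

theorem extVanish_left (h : IsShortExact R f g) (hn : 1 ≤ n) (hB : ExtVanish R B N n)
    (hC : ExtVanish R C N (n + 1)) : ExtVanish R A N n := by
  rw [extVanish_iff_subsingleton_ext (by omega)] at *
  refine subsingleton_of_forall_eq 0 fun x => ?_
  obtain ⟨y, rfl⟩ := Abelian.Ext.contravariant_sequence_exact₁ h.shortExact _ x (add_comm 1 n)
    (hC.elim _ _)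
  rw [hB.elim y 0, Abelian.Ext.comp_zero]

theorem extVanish_right (h : IsShortExact R f g) (hn : 1 ≤ n) (hA : ExtVanish R A N n)
    (hB : ExtVanish R B N (n + 1)) : ExtVanish R C N (n + 1) := by
  rw [extVanish_iff_subsingleton_ext (by omega)] at *
  refine subsingleton_of_forall_eq 0 fun x => ?_
  obtain ⟨y, rfl⟩ := Abelian.Ext.contravariant_sequence_exact₃ h.shortExact _ x (hB.elim _ _)
    (add_comm 1 n)
  rw [hA.elim y 0, Abelian.Ext.comp_zero]

theorem lcomp_surjective (h : IsShortExact R f g) (hC : ExtVanish R C N 1) :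
    Function.Surjective (LinearMap.lcomp R N f) := by
  intro φ
  rw [extVanish_iff_subsingleton_ext le_rfl] at hC
  obtain ⟨y, hy⟩ := Abelian.Ext.contravariant_sequence_exact₁ h.shortExact (ModuleCat.of R N)
    (Abelian.Ext.mk₀ (ModuleCat.ofHom φ)) (add_zero 1) (hC.elim _ _)
  obtain ⟨ψ, rfl⟩ := Abelian.Ext.mk₀_bijective _ _ |>.surjective y
  rw [Abelian.Ext.mk₀_comp_mk₀] at hy
  exact ⟨ψ.hom, congrArg ModuleCat.Hom.hom ((Abelian.Ext.mk₀_bijective _ _).injective hy)⟩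

theorem extVanish_one_right (h : IsShortExact R f g)
    (hf : Function.Surjective (LinearMap.lcomp R N f)) (hB : ExtVanish R B N 1) :
    ExtVanish R C N 1 := by
  rw [extVanish_iff_subsingleton_ext le_rfl] at *
  refine subsingleton_of_forall_eq 0 fun x => ?_
  obtain ⟨y, rfl⟩ := Abelian.Ext.contravariant_sequence_exact₃ h.shortExact _ x (hB.elim _ _)
    (add_zero 1)
  obtain ⟨φ, rfl⟩ := Abelian.Ext.mk₀_bijective _ _ |>.surjective y
  obtain ⟨ψ, hψ⟩ := hf φ.hom
  have hφ : φ = h.shortComplex.f ≫ ModuleCat.ofHom ψ := ModuleCat.hom_ext hψ.symm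
  rw [hφ, ← Abelian.Ext.mk₀_comp_mk₀,
    ← Abelian.Ext.comp_assoc _ _ _ (add_zero 1) (add_zero 0) (by omega),
    h.shortExact.extClass_comp, Abelian.Ext.zero_comp]

theorem dual (h : IsShortExact R f g) (hf : Function.Surjective f.dualMap) :
    IsShortExact R g.dualMap f.dualMap :=
  ⟨LinearMap.dualMap_injective_of_surjective h.surjective, hf,
    LinearMap.exact_lcomp_of_exact_of_surjective (N := R) h.exact h.surjective⟩

end IsShortExact

theorem ExtVanish.of_projective [Module.Projective R A] (hn : 1 ≤ n) : ExtVanish R A N n := by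
  obtain ⟨n, rfl⟩ := Nat.exists_eq_add_of_le' hn
  have : Projective (ModuleCat.of R A) := ModuleCat.projective_of_categoryTheory_projective _
  exact (extVanish_iff_subsingleton_ext hn).2 (Abelian.Ext.subsingleton_of_projective _ _ _)

end ExtVanish

section IsTotallyReflexive

variable {R}
variable {A B C : Type u} [AddCommGroup A] [Module R A] [AddCommGroup B] [Module R B]
  [AddCommGroup C] [Module R C] {f : A →ₗ[R] B} {g : B →ₗ[R] C}

namespace IsTotallyReflexive

theorem finite (h : IsTotallyReflexive R A) : Module.Finite R A := h.1

theorem bijective_dual_eval (h : IsTotallyReflexive R A) :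
    Function.Bijective (Module.Dual.eval R A) := h.2.1

theorem extVanish (h : IsTotallyReflexive R A) {n : ℕ} (hn : 1 ≤ n) : ExtVanish R A R n :=
  h.2.2.1 n hn

theorem extVanish_dual (h : IsTotallyReflexive R A) {n : ℕ} (hn : 1 ≤ n) :
    ExtVanish R (Module.Dual R A) R n :=
  h.2.2.2 n hn

theorem of_projective [Module.Finite R A] [Module.Projective R A] : IsTotallyReflexive R A :=
  ⟨inferInstance, Module.bijective_dual_eval R A, fun _ hn => .of_projective hn,
    fun _ hn => .of_projective hn⟩

theorem middle (h : IsShortExact R f g) (hA : IsTotallyReflexive R A)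
    (hC : IsTotallyReflexive R C) : IsTotallyReflexive R B := by
  have := hA.finite
  have := hC.finite
  have hdual := h.dual (h.lcomp_surjective (hC.extVanish le_rfl))
  have hdual₂ := hdual.dual (hdual.lcomp_surjective (hA.extVanish_dual le_rfl))
  refine ⟨.of_exact h.exact h.surjective, ?_, fun n hn => ?_, fun n hn => ?_⟩
  · exact h.bijective_middle hdual₂ rfl rfl hA.bijective_dual_eval hC.bijective_dual_eval
  · exact h.extVanish_middle hn (hA.extVanish hn) (hC.extVanish hn)
  · exact hdual.extVanish_middle hn (hC.extVanish_dual hn) (hA.extVanish_dual hn)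

theorem left [IsNoetherianRing R] (h : IsShortExact R f g) (hB : IsTotallyReflexive R B)
    (hC : IsTotallyReflexive R C) : IsTotallyReflexive R A := by
  have := hB.finite
  have hdual := h.dual (h.lcomp_surjective (hC.extVanish le_rfl))
  have hg : Function.Surjective g.dualMap.dualMap := by
    have : Function.Surjective (Module.Dual.eval R C ∘ g) :=
      hC.bijective_dual_eval.surjective.comp h.surjective
    exact Function.Surjective.of_comp (g := Module.Dual.eval R B) this
  have hdual₂ := hdual.dual hg
  refine ⟨.of_injective f h.injective, ?_, fun n hn => ?_, fun n hn => ?_⟩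
  · exact LinearMap.bijective_of_bijective_of_injective_of_left_exact f g f.dualMap.dualMap
      g.dualMap.dualMap _ _ _ rfl rfl h.exact hdual₂.exact hB.bijective_dual_eval
      hC.bijective_dual_eval.injective h.injective hdual₂.injective
  · exact h.extVanish_left hn (hB.extVanish hn) (hC.extVanish (by omega))
  · obtain rfl | hn' := hn.eq_or_lt
    · exact hdual.extVanish_one_right hg (hB.extVanish_dual le_rfl)
    · obtain ⟨n, rfl⟩ := Nat.exists_eq_add_of_le' hn
      exact hdual.extVanish_right (by omega) (hC.extVanish_dual (by omega))
        (hB.extVanish_dual hn)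

theorem congr (e : A ≃ₗ[R] B) (h : IsTotallyReflexive R A) : IsTotallyReflexive R B :=
  middle (IsShortExact.zero_linearEquiv e.symm) of_projective h

theorem prod (hA : IsTotallyReflexive R A) (hB : IsTotallyReflexive R B) :
    IsTotallyReflexive R (A × B) :=
  middle IsShortExact.inl_snd hA hB

end IsTotallyReflexive

end IsTotallyReflexive

section GdimLE

variable {R}
variable {A B C F : Type u} [AddCommGroup A] [Module R A] [AddCommGroup B] [Module R B]
  [AddCommGroup C] [Module R C] [AddCommGroup F] [Module R F]
  {f : A →ₗ[R] B} {g : B →ₗ[R] C} {m n : ℕ}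

namespace GdimLE

theorem finite {M : ModuleCat.{u} R} (h : GdimLE R n M) : Module.Finite R M := by
  cases n with
  | zero => exact IsTotallyReflexive.finite h
  | succ n =>
    obtain ⟨X, K, f, g, hX, hfg, -⟩ := h
    have := hX.finite
    exact .of_surjective g hfg.surjective

theorem congr (e : A ≃ₗ[R] B) (h : GdimLE R n (ModuleCat.of R A)) :
    GdimLE R n (ModuleCat.of R B) := by
  cases n with
  | zero => exact IsTotallyReflexive.congr e h
  | succ n =>
    obtain ⟨X, K, f, g, hX, hfg, hK⟩ := h
    exact ⟨X, K, _, _, hX, hfg.congr_outer (.refl R K) e, hK⟩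

theorem succ {M : ModuleCat.{u} R} (h : GdimLE R n M) : GdimLE R (n + 1) M := by
  induction n generalizing M with
  | zero =>
    exact ⟨M, ModuleCat.of R PUnit, 0, _, h, .zero_linearEquiv (.refl R M),
      IsTotallyReflexive.of_projective (A := PUnit)⟩
  | succ n ih =>
    obtain ⟨X, K, f, g, hX, hfg, hK⟩ := h
    exact ⟨X, K, f, g, hX, hfg, ih hK⟩

theorem mono (hmn : m ≤ n) {M : ModuleCat.{u} R} (h : GdimLE R m M) : GdimLE R n M :=
  Nat.le_induction h (fun _ _ => succ) n hmn

theorem prod (hA : GdimLE R n (ModuleCat.of R A)) (hF : IsTotallyReflexive R F) :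
    GdimLE R n (ModuleCat.of R (A × F)) := by
  cases n with
  | zero => exact IsTotallyReflexive.prod hA hF
  | succ n =>
    obtain ⟨X, K, f, g, hX, hfg, hK⟩ := hA
    exact ⟨ModuleCat.of R (X × F), K, _, _, hX.prod hF, hfg.prodMap_id, hK⟩

variable [IsNoetherianRing R]

theorem left_of_isTotallyReflexive (h : IsShortExact R f g) (hB : GdimLE R n (ModuleCat.of R B))
    (hC : IsTotallyReflexive R C) : GdimLE R n (ModuleCat.of R A) := by
  cases n with
  | zero => exact IsTotallyReflexive.left h hB hC
  | succ n =>
    obtain ⟨X, K, k, p, hX, hkp, hK⟩ := hB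
    obtain ⟨L, s, t, l, hst, hl⟩ := h.exists_ker_comp hkp
    exact ⟨L, K, s, t, hX.left hl hC, hst, hK⟩

theorem left_of_projective [Module.Finite R B] [Module.Projective R B] (h : IsShortExact R f g)
    (hC : GdimLE R n (ModuleCat.of R C)) : GdimLE R (n - 1) (ModuleCat.of R A) := by
  cases n with
  | zero => exact IsTotallyReflexive.left h .of_projective hC
  | succ n =>
    obtain ⟨X, K, k, p, hX, hkp, hK⟩ := hC
    obtain ⟨j, q, hjq⟩ := hkp.exists_prod_of_projective h
    exact left_of_isTotallyReflexive hjq (hK.prod .of_projective) hX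

theorem middle (h : IsShortExact R f g) (hA : GdimLE R n (ModuleCat.of R A))
    (hC : GdimLE R n (ModuleCat.of R C)) : GdimLE R n (ModuleCat.of R B) := by
  induction n generalizing A B C with
  | zero => exact IsTotallyReflexive.middle h hA hC
  | succ n ih =>
    have : Module.Finite R A := hA.finite
    have : Module.Finite R C := hC.finite
    obtain ⟨a, p, hp⟩ := Module.Finite.exists_fin' R A
    obtain ⟨c, q, hq⟩ := Module.Finite.exists_fin' R C
    have hp := IsShortExact.ker_subtype hp
    have hq := IsShortExact.ker_subtype hq
    obtain ⟨S, k, r, f', g', hkr, hS⟩ := h.exists_horseshoe hp hq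
    exact ⟨ModuleCat.of R ((Fin a → R) × (Fin c → R)), S, k, r, .of_projective, hkr,
      ih hS (left_of_projective hp hA) (left_of_projective hq hC)⟩

theorem right (h : IsShortExact R f g) (hA : GdimLE R n (ModuleCat.of R A))
    (hB : GdimLE R (n + 1) (ModuleCat.of R B)) : GdimLE R (n + 1) (ModuleCat.of R C) := by
  obtain ⟨X, K, k, p, hX, hkp, hK⟩ := hB
  obtain ⟨L, s, t, l, hst, hl⟩ := h.exists_ker_comp hkp
  exact ⟨X, L, l, _, hX, hl, middle hst hK hA⟩

end GdimLE

variable (R) in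
/-- The class of modules of finite Gorenstein dimension. -/
def HasFiniteGdim (M : ModuleCat.{u} R) : Prop :=
  ∃ n : ℕ, GdimLE R n M

namespace HasFiniteGdim

theorem finite {M : ModuleCat.{u} R} (h : HasFiniteGdim R M) : Module.Finite R M :=
  have ⟨_, hn⟩ := h
  hn.finite

theorem of_projective [Module.Finite R A] [Module.Projective R A] :
    HasFiniteGdim R (ModuleCat.of R A) :=
  ⟨0, IsTotallyReflexive.of_projective (A := A)⟩

theorem congr (e : A ≃ₗ[R] B) (h : HasFiniteGdim R (ModuleCat.of R A)) :
    HasFiniteGdim R (ModuleCat.of R B) :=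
  h.imp fun _ hn => hn.congr e

variable [IsNoetherianRing R]

theorem left_of_projective [Module.Finite R B] [Module.Projective R B] (h : IsShortExact R f g)
    (hC : HasFiniteGdim R (ModuleCat.of R C)) : HasFiniteGdim R (ModuleCat.of R A) :=
  have ⟨_, hn⟩ := hC
  ⟨_, hn.left_of_projective h⟩

theorem middle (h : IsShortExact R f g) (hA : HasFiniteGdim R (ModuleCat.of R A))
    (hC : HasFiniteGdim R (ModuleCat.of R C)) : HasFiniteGdim R (ModuleCat.of R B) :=
  have ⟨_, hm⟩ := hA
  have ⟨_, hn⟩ := hC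
  ⟨_, .middle h (hm.mono (le_max_left _ _)) (hn.mono (le_max_right _ _))⟩

theorem right (h : IsShortExact R f g) (hA : HasFiniteGdim R (ModuleCat.of R A))
    (hB : HasFiniteGdim R (ModuleCat.of R B)) : HasFiniteGdim R (ModuleCat.of R C) :=
  have ⟨_, hm⟩ := hA
  have ⟨_, hn⟩ := hB
  ⟨_, .right h (hm.mono (le_max_left _ _)) (hn.mono (Nat.le_succ_of_le (le_max_right _ _)))⟩

theorem pi (hA : HasFiniteGdim R (ModuleCat.of R A)) (a : ℕ) :
    HasFiniteGdim R (ModuleCat.of R (Fin a → A)) := by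
  induction a with
  | zero => exact of_projective
  | succ a ih => exact (middle .inl_snd hA ih).congr (Fin.consLinearEquiv R fun _ => A)

end HasFiniteGdim

end GdimLE

section IsSyzygy

variable {R}

namespace IsSyzygy

variable {m n : ℕ} {M V W : ModuleCat.{u} R}

theorem one {F : Type u} [AddCommGroup F] [Module R F] [Module.Free R F] [Module.Finite R F]
    {i : W →ₗ[R] F} {p : F →ₗ[R] M} (h : IsShortExact R i p) : IsSyzygy R 1 W M :=
  ⟨W, ModuleCat.of R F, i, p, ‹_›, ‹_›, h, ⟨.refl R W⟩⟩

theorem congr {A B : Type u} [AddCommGroup A] [Module R A] [AddCommGroup B] [Module R B]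
    (e : A ≃ₗ[R] B) (h : IsSyzygy R n V (ModuleCat.of R A)) :
    IsSyzygy R n V (ModuleCat.of R B) := by
  cases n with
  | zero => exact h.map (·.trans e)
  | succ n =>
    obtain ⟨W, F, i, p, hF, hF', hip, hV⟩ := h
    exact ⟨W, F, _, _, hF, hF', hip.congr_outer (.refl R W) e, hV⟩

theorem trans (hV : IsSyzygy R m V W) (hW : IsSyzygy R n W M) : IsSyzygy R (n + m) V M := by
  induction n generalizing M with
  | zero =>
    obtain ⟨e⟩ := hW
    exact (zero_add m).symm ▸ congr e hV
  | succ n ih =>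
    obtain ⟨U, F, i, p, hF, hF', hip, hU⟩ := hW
    exact (add_right_comm n 1 m).symm ▸ ⟨U, F, i, p, hF, hF', hip, ih hU⟩

theorem pi (h : IsSyzygy R n V M) (a : ℕ) :
    IsSyzygy R n (ModuleCat.of R (Fin a → V)) (ModuleCat.of R (Fin a → M)) := by
  induction n generalizing M with
  | zero => exact h.map fun e => .piCongrRight fun _ => e
  | succ n ih =>
    obtain ⟨W, F, i, p, hF, hF', hip, hV⟩ := h
    exact ⟨ModuleCat.of R (Fin a → W), ModuleCat.of R (Fin a → F), _, _,
      inferInstanceAs (Module.Free R (Fin a → F)), inferInstanceAs (Module.Finite R (Fin a → F)),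
      hip.compLeft (Fin a), ih hV⟩

variable [IsNoetherianRing R]

theorem finite (h : IsSyzygy R n V M) [Module.Finite R M] : Module.Finite R V := by
  induction n generalizing M with
  | zero => exact h.elim fun e => .equiv e.symm
  | succ n ih =>
    obtain ⟨W, F, i, p, _, _, hip, hV⟩ := h
    have : Module.Finite R W := .of_injective i hip.injective
    exact ih hV

variable (n M) in
theorem exists_of_finite [Module.Finite R M] : ∃ V : ModuleCat.{u} R, IsSyzygy R n V M := by
  induction n generalizing M with
  | zero => exact ⟨M, ⟨.refl R M⟩⟩
  | succ n ih =>
    obtain ⟨c, p, hp⟩ := Module.Finite.exists_fin' R M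
    obtain ⟨V, hV⟩ := ih (ModuleCat.of R (LinearMap.ker p))
    have hcover := one (W := ModuleCat.of R (LinearMap.ker p)) (IsShortExact.ker_subtype hp)
    exact ⟨V, add_comm n 1 ▸ hV.trans hcover⟩

theorem exists_isShortExact {A B C V' : ModuleCat.{u} R} {f : A →ₗ[R] B} {g : B →ₗ[R] C}
    (h : IsShortExact R f g) (hV : IsSyzygy R n V A) (hV' : IsSyzygy R n V' C)
    (hB : HasFiniteGdim R B) :
    ∃ (L : ModuleCat.{u} R) (s : V →ₗ[R] L) (t : L →ₗ[R] V'),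
      IsShortExact R s t ∧ HasFiniteGdim R L := by
  induction n generalizing A B C with
  | zero =>
    obtain ⟨⟨e⟩, ⟨e'⟩⟩ := hV, hV'
    exact ⟨B, _, _, h.congr_outer e e'.symm, hB⟩
  | succ n ih =>
    obtain ⟨W, F, i, p, _, _, hip, hV⟩ := hV
    obtain ⟨W', F', i', p', _, _, hip', hV'⟩ := hV'
    obtain ⟨S, k, r, f', g', hkr, hS⟩ := h.exists_horseshoe hip hip'
    exact ih hS hV hV' (.left_of_projective hkr hB)

end IsSyzygy

end IsSyzygy

section ReducingStep

/-- The identification of the `a`-th power of the `b`-th power of a module with its `(a * b)`-th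
power. -/
def piPiEquivPiMul (M : Type*) [AddCommGroup M] [Module R M] (a b : ℕ) :
    (Fin a → Fin b → M) ≃ₗ[R] (Fin (a * b) → M) :=
  (LinearEquiv.curry R M (Fin a) (Fin b)).symm.trans
    (LinearEquiv.funCongrLeft R M finProdFinEquiv.symm)

/-- The linear version of `Equiv.piComm` for a constant family, used to interchange iterated
powers of a module. -/
def piCommLinearEquiv (M : Type*) [AddCommGroup M] [Module R M] (ι κ : Type*) :
    (ι → κ → M) ≃ₗ[R] (κ → ι → M) :=
  (Equiv.piComm fun _ _ => M).toLinearEquiv ⟨fun _ _ => rfl, fun _ _ => rfl⟩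

variable {R} [IsNoetherianRing R]

theorem HasFiniteGdim.exists_extension {A B C D F L S : Type u}
    [AddCommGroup A] [Module R A] [AddCommGroup B] [Module R B] [AddCommGroup C] [Module R C]
    [AddCommGroup D] [Module R D] [AddCommGroup F] [Module R F] [AddCommGroup L] [Module R L]
    [AddCommGroup S] [Module R S] [Module.Finite R F] [Module.Projective R F]
    {f : A →ₗ[R] B} {g : B →ₗ[R] C} (h : IsShortExact R f g)
    {i : S →ₗ[R] F} {p : F →ₗ[R] C} (hF : IsShortExact R i p)
    {j : S →ₗ[R] L} {q : L →ₗ[R] D} (hL : IsShortExact R j q)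
    (hB : HasFiniteGdim R (ModuleCat.of R B)) (hL' : HasFiniteGdim R (ModuleCat.of R L)) :
    ∃ (Y : ModuleCat.{u} R) (s : A →ₗ[R] Y) (t : Y →ₗ[R] D),
      IsShortExact R s t ∧ HasFiniteGdim R Y := by
  obtain ⟨k, r, hkr⟩ := h.exists_prod_of_projective hF
  obtain ⟨P, s, t, s', t', hst, hst'⟩ := hkr.exists_pushout hL
  have hP : HasFiniteGdim R P := .middle hst' hL' hB
  have hfst := (IsShortExact.inl_snd (A := F) (B := A)).congr_middle (.prodComm R F A)
  obtain ⟨Y, π, s'', t'', hπ, hY⟩ := hst.exists_coker_comp hfst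
  exact ⟨Y, s'', t'', hY, .right hπ .of_projective hP⟩

theorem ReducingStep.exists_mul_self {M K : ModuleCat.{u} R} [Module.Finite R M] {a b n : ℕ}
    (h : ReducingStep R M K a b n) (hK : HasFiniteGdim R K) :
    ∃ Y : ModuleCat.{u} R,
      ReducingStep R M Y (a * a) (b * b) (n + (n + 1)) ∧ HasFiniteGdim R Y := by
  obtain ⟨W, f, g, hW, hfg⟩ := h
  have := hW.finite
  obtain ⟨c, p, hp⟩ := Module.Finite.exists_fin' R W
  have hp := IsShortExact.ker_subtype hp
  let V := ModuleCat.of R (LinearMap.ker p)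
  obtain ⟨V', hV'⟩ := IsSyzygy.exists_of_finite (n + 1) W
  have hV : IsSyzygy R (n + 1) V M := (IsSyzygy.one (W := V) hp).trans hW
  obtain ⟨L, s, t, hst, hL⟩ := (hV.pi a).exists_isShortExact hfg (hV'.pi b) hK
  obtain ⟨Y, s', t', hY, hY'⟩ := HasFiniteGdim.exists_extension (hfg.compLeft (Fin a))
    ((hp.compLeft (Fin b)).compLeft (Fin a))
    ((hst.compLeft (Fin b)).congr_outer (piCommLinearEquiv R V (Fin a) (Fin b))
      (piPiEquivPiMul R V' b b))
    (hK.pi a) (hL.pi b)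
  exact ⟨Y, ⟨V', _, _, hV'.trans hW,
    hY.congr_outer (piPiEquivPiMul R M a a).symm (.refl R _)⟩, hY'⟩

end ReducingStep

theorem stmt8_general {R : Type u} [CommRing R] [IsNoetherianRing R] {M K : ModuleCat.{u} R}
    [Module.Finite R M] {a b n : ℕ} (h : ReducingStep R M K a b n) (hK : HasFiniteGdim R K)
    (i : ℕ) : ∃ Y : ModuleCat.{u} R,
      ReducingStep R M Y (a ^ 2 ^ i) (b ^ 2 ^ i) (2 ^ i * (n + 1) - 1) ∧ HasFiniteGdim R Y := by
  induction i with
  | zero => exact ⟨K, by simpa using h, hK⟩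
  | succ i ih =>
    obtain ⟨Y, hY, hfin⟩ := ih
    have hpow (c : ℕ) : c ^ 2 ^ (i + 1) = c ^ 2 ^ i * c ^ 2 ^ i := by
      rw [pow_succ, mul_two, pow_add]
    have hindex : 2 ^ (i + 1) * (n + 1) - 1 =
        (2 ^ i * (n + 1) - 1) + ((2 ^ i * (n + 1) - 1) + 1) := by
      have : 0 < 2 ^ i * (n + 1) := by positivity
      rw [pow_succ, mul_right_comm]
      omega
    rw [hpow, hpow, hindex]
    exact hY.exists_mul_self hfin

theorem stmt8 (R : Type u) [CommRing R] [IsNoetherianRing R] [IsLocalRing R]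
    (M K : Type u) [AddCommGroup M] [Module R M] [Module.Finite R M]
    [AddCommGroup K] [Module R K] [Module.Finite R K]
    (a b n : ℕ) (ha : 1 ≤ a) (hb : 1 ≤ b)
    (W : ModuleCat.{u} R) (hW : IsSyzygy R n W (ModuleCat.of R M))
    (f : (Fin a → M) →ₗ[R] K) (g : K →ₗ[R] (Fin b → W))
    (hfg : IsShortExact R f g)
    (hK : ∃ m : ℕ, GdimLE R m (ModuleCat.of R K)) :
    ∀ i : ℕ, 1 ≤ i → ∃ (Y W' : ModuleCat.{u} R)
      (f' : (Fin (a ^ 2 ^ i) → M) →ₗ[R] Y) (g' : Y →ₗ[R] (Fin (b ^ 2 ^ i) → W')),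
      Module.Finite R Y ∧ IsSyzygy R (2 ^ i * (n + 1) - 1) W' (ModuleCat.of R M) ∧
      IsShortExact R f' g' ∧ ∃ m : ℕ, GdimLE R m Y := by
  intro i _
  obtain ⟨Y, ⟨W', f', g', hW', hf'g'⟩, hY⟩ :=
    stmt8_general (M := ModuleCat.of R M) (K := ModuleCat.of R K) ⟨W, f, g, hW, hfg⟩ hK i
  exact ⟨Y, W', f', g', hY.finite, hW', hf'g', hY⟩
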